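/- arXiv:1609.07795 — 2 statements merged into one kernel-verified Lean document; each statement's English description precedes it below -/
import Mathlib

section
/- Let n ≥ 1 and R = ℂ[x₁,…,xₙ,y₁,…,yₙ]. For 1 ≤ a,b ≤ n define the ℂ-linear endomorphisms of R: E_{ab} := x_a·∂/∂x_b + y_a·∂/∂y_b + δ_{ab}·id, F_{ab} := ∂²/∂y_a∂x_b − ∂²/∂x_a∂y_b, and F̃_{ab} := multiplication by (y_a x_b − x_a y_b). Then these operators satisfy the 𝔰𝔬*(2n) commutation relations: [E_{ab},E_{cd}] = δ_{cb}E_{ad} − δ_{ad}E_{cb}; [E_{ab},F̃_{cd}] = δ_{bc}F̃_{ad} − δ_{bd}F̃_{ac}; [E_{ab},F_{cd}] = δ_{ad}F_{bc} − δ_{ac}F_{bd}; [F_{ab},F̃_{cd}] = δ_{db}E_{ca} + δ_{ca}E_{db} − δ_{cb}E_{da} − δ_{da}E_{cb}; and [F_{ab},F_{cd}] = [F̃_{ab},F̃_{cd}] = 0. -/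
open MvPolynomial

/-- `E_{ab} = x_a ∂/∂x_b + y_a ∂/∂y_b + δ_{ab}` on `ℂ[x₁,…,xₙ,y₁,…,yₙ]`. -/
noncomputable def Eop (n : ℕ) (a b : Fin n) (p : MvPolynomial (Fin n ⊕ Fin n) ℂ) :
    MvPolynomial (Fin n ⊕ Fin n) ℂ :=
  X (Sum.inl a) * pderiv (Sum.inl b) p + X (Sum.inr a) * pderiv (Sum.inr b) p +
    (if a = b then (1 : ℂ) else 0) • p

/-- `F_{ab} = ∂²/∂y_a∂x_b - ∂²/∂x_a∂y_b` on `ℂ[x₁,…,xₙ,y₁,…,yₙ]`. -/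
noncomputable def Fop (n : ℕ) (a b : Fin n) (p : MvPolynomial (Fin n ⊕ Fin n) ℂ) :
    MvPolynomial (Fin n ⊕ Fin n) ℂ :=
  pderiv (Sum.inr a) (pderiv (Sum.inl b) p) - pderiv (Sum.inl a) (pderiv (Sum.inr b) p)

/-- `F̃_{ab}` = multiplication by `y_a x_b - x_a y_b` on `ℂ[x₁,…,xₙ,y₁,…,yₙ]`. -/
noncomputable def Ftildeop (n : ℕ) (a b : Fin n) (p : MvPolynomial (Fin n ⊕ Fin n) ℂ) :
    MvPolynomial (Fin n ⊕ Fin n) ℂ :=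
  (X (Sum.inr a) * X (Sum.inl b) - X (Sum.inl a) * X (Sum.inr b)) * p

/-- The Kronecker delta, valued in the polynomial ring. -/
noncomputable def polyDelta {n : ℕ} (a b : Fin n) : MvPolynomial (Fin n ⊕ Fin n) ℂ :=
  if a = b then 1 else 0

lemma polyDelta_comm {n : ℕ} (a b : Fin n) : polyDelta a b = polyDelta b a := by
  simp only [polyDelta, eq_comm]

lemma ite_smul_eq_polyDelta_mul {n : ℕ} (a b : Fin n) (p : MvPolynomial (Fin n ⊕ Fin n) ℂ) :
    (if a = b then (1 : ℂ) else 0) • p = polyDelta a b * p := by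
  unfold polyDelta
  split_ifs <;> simp

lemma pderiv_polyDelta {n : ℕ} (i : Fin n ⊕ Fin n) (a b : Fin n) :
    pderiv i (polyDelta a b) = 0 := by
  unfold polyDelta
  split_ifs <;> simp

lemma pderiv_inl_X_inl {n : ℕ} (a b : Fin n) :
    pderiv (Sum.inl a) (X (Sum.inl b) : MvPolynomial (Fin n ⊕ Fin n) ℂ) = polyDelta a b := by
  simp [pderiv_X, polyDelta, Pi.single_apply, eq_comm]

lemma pderiv_inr_X_inr {n : ℕ} (a b : Fin n) :
    pderiv (Sum.inr a) (X (Sum.inr b) : MvPolynomial (Fin n ⊕ Fin n) ℂ) = polyDelta a b := by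
  simp [pderiv_X, polyDelta, Pi.single_apply, eq_comm]

lemma pderiv_inl_X_inr {n : ℕ} (a b : Fin n) :
    pderiv (Sum.inl a) (X (Sum.inr b) : MvPolynomial (Fin n ⊕ Fin n) ℂ) = 0 :=
  pderiv_X_of_ne (by simp)

lemma pderiv_inr_X_inl {n : ℕ} (a b : Fin n) :
    pderiv (Sum.inr a) (X (Sum.inl b) : MvPolynomial (Fin n ⊕ Fin n) ℂ) = 0 :=
  pderiv_X_of_ne (by simp)

lemma pderiv_pderiv_comm {σ R : Type*} [CommRing R] (i j : σ) (p : MvPolynomial σ R) :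
    pderiv i (pderiv j p) = pderiv j (pderiv i p) := by
  classical
  have h : ⁅pderiv (R := R) i, pderiv (R := R) j⁆ = 0 := by
    refine derivation_ext fun k => ?_
    simp [Derivation.commutator_apply, pderiv_X, Pi.single_apply, apply_ite]
  exact sub_eq_zero.mp (by simpa [Derivation.commutator_apply] using congrArg (· p) h)

/-- The operators `E_{ab}`, `F_{ab}`, `F̃_{ab}` satisfy the `𝔰𝔬*(2n)` commutation
relations. -/
theorem so_star_commutation_relations
    {n : ℕ} (hn : 1 ≤ n) (a b c d : Fin n) (p : MvPolynomial (Fin n ⊕ Fin n) ℂ) :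
    (Eop n a b (Eop n c d p) - Eop n c d (Eop n a b p) =
      (if c = b then (1 : ℂ) else 0) • Eop n a d p -
      (if a = d then (1 : ℂ) else 0) • Eop n c b p) ∧
    (Eop n a b (Ftildeop n c d p) - Ftildeop n c d (Eop n a b p) =
      (if b = c then (1 : ℂ) else 0) • Ftildeop n a d p -
      (if b = d then (1 : ℂ) else 0) • Ftildeop n a c p) ∧
    (Eop n a b (Fop n c d p) - Fop n c d (Eop n a b p) =
      (if a = d then (1 : ℂ) else 0) • Fop n b c p -
      (if a = c then (1 : ℂ) else 0) • Fop n b d p) ∧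
    (Fop n a b (Ftildeop n c d p) - Ftildeop n c d (Fop n a b p) =
      (if d = b then (1 : ℂ) else 0) • Eop n c a p +
      (if c = a then (1 : ℂ) else 0) • Eop n d b p -
      (if c = b then (1 : ℂ) else 0) • Eop n d a p -
      (if d = a then (1 : ℂ) else 0) • Eop n c b p) ∧
    (Fop n a b (Fop n c d p) - Fop n c d (Fop n a b p) = 0) ∧
    (Ftildeop n a b (Ftildeop n c d p) - Ftildeop n c d (Ftildeop n a b p) = 0) := by
  refine ⟨?_, ?_, ?_, ?_, ?_, ?_⟩ <;>
    simp only [Eop, Fop, Ftildeop, ite_smul_eq_polyDelta_mul, map_add, map_sub, pderiv_mul,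
      pderiv_polyDelta, pderiv_inl_X_inl, pderiv_inr_X_inr, pderiv_inl_X_inr, pderiv_inr_X_inl,
      polyDelta_comm, pderiv_pderiv_comm, map_zero] <;>
    ring
end

section
/- In the tensor product model of F_γ ⊗ D⁺_j (see context), for each μ ∈ M_γ the vector ψ_(μ) := Σ_{ν=−γ}^{μ} (−1)^{γ+ν} · (∏_{σ=−γ}^{ν−1} Γ₊(j, j+μ−σ)/Γ₊(γ,σ)) · e_ν ⊗ f_{j+1+μ−ν} is nonzero and satisfies J₋ ψ_(μ) = 0 and Q ψ_(μ) = −(j+μ)(j+μ+1)·ψ_(μ); i.e. the ψ_(μ) are lowest weight vectors and Casimir eigenvectors with eigenvalues q_(μ) = −(j+μ)(j+μ+1). -/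
noncomputable section

/-- The principal complex square root, `√z = z^{1/2}` (so `(√z)² = z` for all `z ∈ ℂ`). -/
def csqrt (z : ℂ) : ℂ := z ^ (1 / 2 : ℂ)

/-- `Γ₊(x,y) = i √(x-y) √(x+y+1)`. -/
def Gp (x y : ℂ) : ℂ := Complex.I * csqrt (x - y) * csqrt (x + y + 1)

/-- `Γ₋(x,y) = i √(x+y) √(x-y+1)`. -/
def Gm (x y : ℂ) : ℂ := Complex.I * csqrt (x + y) * csqrt (x - y + 1)

/-- The carrier of the coupling `F_γ ⊗ D⁺_j` with `2γ = N`: the basis vector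
`e_ν ⊗ f_m` with `ν = -γ + a` (`a ≤ N`) and `m = j + 1 + b` is indexed by
`(a, b) : Fin (N+1) × ℕ`. -/
abbrev Wmod (N : ℕ) := (Fin (N + 1) × ℕ) →₀ ℂ

/-- `γ = N/2` as a complex number. -/
def gammaC (N : ℕ) : ℂ := (N : ℂ) / 2

/-- `ν = -γ + a`. -/
def nuC (N : ℕ) (a : Fin (N + 1)) : ℂ := -gammaC N + (a : ℕ)

/-- `m = j + 1 + b`. -/
def mC (j : ℂ) (b : ℕ) : ℂ := j + 1 + (b : ℕ)

/-- `J₀ (e_ν ⊗ f_m) = (ν + m) e_ν ⊗ f_m`. -/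
def J0op (N : ℕ) (j : ℂ) : Wmod N →ₗ[ℂ] Wmod N :=
  Finsupp.lsum ℂ fun ab => (nuC N ab.1 + mC j ab.2) • Finsupp.lsingle ab

/-- `J₊ (e_ν ⊗ f_m) = Γ₊(γ,ν) e_{ν+1} ⊗ f_m + Γ₊(j,m) e_ν ⊗ f_{m+1}` (terms with
vanishing coefficient drop out, so the wrap-around `Fin` index is harmless). -/
def Jpop (N : ℕ) (j : ℂ) : Wmod N →ₗ[ℂ] Wmod N :=
  Finsupp.lsum ℂ fun ab =>
    Gp (gammaC N) (nuC N ab.1) • Finsupp.lsingle (ab.1 + 1, ab.2) +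
    Gp j (mC j ab.2) • Finsupp.lsingle (ab.1, ab.2 + 1)

/-- `J₋ (e_ν ⊗ f_m) = Γ₋(γ,ν) e_{ν-1} ⊗ f_m + Γ₋(j,m) e_ν ⊗ f_{m-1}` (terms with
vanishing coefficient drop out, so the truncated index is harmless). -/
def Jmop (N : ℕ) (j : ℂ) : Wmod N →ₗ[ℂ] Wmod N :=
  Finsupp.lsum ℂ fun ab =>
    Gm (gammaC N) (nuC N ab.1) • Finsupp.lsingle (ab.1 - 1, ab.2) +
    Gm j (mC j ab.2) • Finsupp.lsingle (ab.1, ab.2 - 1)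

/-- The Casimir operator `Q = -J₀(J₀+1) + J₋J₊`. -/
def Qop (N : ℕ) (j : ℂ) : Wmod N →ₗ[ℂ] Wmod N :=
  -(J0op N j ∘ₗ (J0op N j + LinearMap.id)) + Jmop N j ∘ₗ Jpop N j

/-- The vector `ψ_(μ)`, `μ = -γ + u`:
`ψ_(μ) = ∑_{ν=-γ}^{μ} (-1)^{γ+ν} (∏_{σ=-γ}^{ν-1} Γ₊(j, j+μ-σ)/Γ₊(γ,σ)) e_ν ⊗ f_{j+1+μ-ν}`. -/
def psiVec (N : ℕ) (j : ℂ) (u : ℕ) (hu : u ≤ N) : Wmod N :=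
  ∑ a : Fin (u + 1),
    ((-1 : ℂ) ^ (a : ℕ) *
      ∏ s ∈ Finset.range (a : ℕ),
        Gp j (j + (u : ℂ) - (s : ℂ)) / Gp (gammaC N) (-gammaC N + (s : ℂ))) •
      Finsupp.single (Fin.castLE (Nat.succ_le_succ hu) a, u - (a : ℕ)) (1 : ℂ)

lemma csqrt_zero : csqrt 0 = 0 := by
  simp [csqrt]

lemma csqrt_mul_self (z : ℂ) : csqrt z * csqrt z = z := by
  rw [csqrt, ← pow_two, one_div]
  exact_mod_cast Complex.cpow_nat_inv_pow z two_ne_zero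

lemma csqrt_ne_zero {z : ℂ} (hz : z ≠ 0) : csqrt z ≠ 0 := fun h =>
  hz (by rw [← csqrt_mul_self z, h, zero_mul])

lemma Gm_add_one (x y : ℂ) : Gm x (y + 1) = Gp x y := by
  rw [Gm, Gp, show x + (y + 1) = x + y + 1 by ring, show x - (y + 1) + 1 = x - y by ring]
  ring

lemma Gp_mul_self (x y : ℂ) : Gp x y * Gp x y = -((x - y) * (x + y + 1)) := by
  calc Gp x y * Gp x y = (Complex.I * Complex.I) * (csqrt (x - y) * csqrt (x - y)) *
        (csqrt (x + y + 1) * csqrt (x + y + 1)) := by rw [Gp]; ring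
    _ = _ := by rw [csqrt_mul_self, csqrt_mul_self, Complex.I_mul_I]; ring

lemma Gm_mul_self (x y : ℂ) : Gm x y * Gm x y = -((x + y) * (x - y + 1)) := by
  have h := Gp_mul_self x (y - 1)
  rw [← Gm_add_one, sub_add_cancel] at h
  rw [h]
  ring

/-- `Γ₊(γ,γ) = 0`. -/
lemma Gp_self (x : ℂ) : Gp x x = 0 := by
  simp [Gp, csqrt_zero]

/-- `Γ₋(γ,-γ) = 0`. -/
lemma Gm_neg_self (x : ℂ) : Gm x (-x) = 0 := by
  simp [Gm, csqrt_zero]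

/-- `Γ₋(j,j+1) = 0`. -/
lemma Gm_self_add_one (x : ℂ) : Gm x (x + 1) = 0 := by
  rw [Gm_add_one, Gp_self]

/-- `Γ₊(γ,σ) ≠ 0` for `σ = -γ + s` with `s < 2γ`. -/
lemma Gp_gammaC_ne_zero {N s : ℕ} (hs : s < N) : Gp (gammaC N) (-gammaC N + (s : ℂ)) ≠ 0 := by
  refine mul_ne_zero (mul_ne_zero Complex.I_ne_zero (csqrt_ne_zero ?_)) (csqrt_ne_zero ?_)
  · rw [show gammaC N - (-gammaC N + (s : ℂ)) = (N : ℂ) - s by rw [gammaC]; ring, sub_ne_zero]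
    exact_mod_cast hs.ne'
  · rw [show gammaC N + (-gammaC N + (s : ℂ)) + 1 = (s : ℂ) + 1 by ring]
    exact Nat.cast_add_one_ne_zero s

lemma nuC_last (N : ℕ) : nuC N (Fin.last N) = gammaC N := by
  simp only [nuC, gammaC, Fin.val_last]
  ring

lemma nuC_zero (N : ℕ) : nuC N 0 = -gammaC N := by
  simp [nuC]

lemma nuC_add_one {N : ℕ} {a : Fin (N + 1)} (ha : a ≠ Fin.last N) :
    nuC N (a + 1) = nuC N a + 1 := by
  rw [nuC, nuC, Fin.val_add_one_of_lt (Fin.lt_last_iff_ne_last.mpr ha)]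
  push_cast
  ring

lemma Gp_mul_Gm_nuC (N : ℕ) (a : Fin (N + 1)) :
    Gp (gammaC N) (nuC N a) * Gm (gammaC N) (nuC N (a + 1)) =
      -((gammaC N - nuC N a) * (gammaC N + nuC N a + 1)) := by
  by_cases ha : a = Fin.last N
  · rw [ha, nuC_last, Gp_self]
    ring
  · rw [nuC_add_one ha, Gm_add_one, Gp_mul_self]

lemma Gm_mul_Gp_nuC (N : ℕ) (a : Fin (N + 1)) :
    Gm (gammaC N) (nuC N a) * Gp (gammaC N) (nuC N (a - 1)) =
      -((gammaC N + nuC N a) * (gammaC N - nuC N a + 1)) := by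
  by_cases ha : a = 0
  · rw [ha, nuC_zero, Gm_neg_self]
    ring
  · have hlast : a - 1 ≠ Fin.last N := fun h => ha (by
      rw [← sub_add_cancel a 1, h, Fin.last_add_one])
    rw [← Gm_add_one, ← nuC_add_one hlast, sub_add_cancel, Gm_mul_self]

lemma mC_zero (j : ℂ) : mC j 0 = j + 1 := by
  simp [mC]

lemma mC_add_one (j : ℂ) (b : ℕ) : mC j (b + 1) = mC j b + 1 := by
  simp only [mC]
  push_cast
  ring

lemma J0op_single (N : ℕ) (j : ℂ) (a : Fin (N + 1)) (b : ℕ) (c : ℂ) :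
    J0op N j (Finsupp.single (a, b) c) = (nuC N a + mC j b) • Finsupp.single (a, b) c := by
  simp [J0op]

lemma Jpop_single (N : ℕ) (j : ℂ) (a : Fin (N + 1)) (b : ℕ) (c : ℂ) :
    Jpop N j (Finsupp.single (a, b) c) =
      Gp (gammaC N) (nuC N a) • Finsupp.single (a + 1, b) c +
        Gp j (mC j b) • Finsupp.single (a, b + 1) c := by
  simp [Jpop]

lemma Jmop_single (N : ℕ) (j : ℂ) (a : Fin (N + 1)) (b : ℕ) (c : ℂ) :
    Jmop N j (Finsupp.single (a, b) c) =
      Gm (gammaC N) (nuC N a) • Finsupp.single (a - 1, b) c +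
        Gm j (mC j b) • Finsupp.single (a, b - 1) c := by
  simp [Jmop]

/-- The commutation relation `J₋J₊ = J₊J₋ + 2J₀`. -/
lemma Jmop_Jpop (N : ℕ) (j : ℂ) (w : Wmod N) :
    Jmop N j (Jpop N j w) = Jpop N j (Jmop N j w) + (2 : ℂ) • J0op N j w := by
  induction w using Finsupp.induction_linear with
  | zero => simp
  | add v w hv hw => simp only [map_add, hv, hw, smul_add]; abel
  | single ab c =>
    obtain ⟨a, b⟩ := ab
    have hp := Gp_mul_Gm_nuC N a
    have hm := Gm_mul_Gp_nuC N a
    simp only [Jpop_single, Jmop_single, J0op_single, map_add, map_smul, smul_add, smul_smul,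
      add_sub_cancel_right, sub_add_cancel, add_tsub_cancel_right, mC_add_one, Gm_add_one,
      hp, hm, Gp_mul_self]
    cases b with
    | zero =>
      rw [mC_zero, Gm_self_add_one]
      simp only [zero_mul, mul_zero, zero_smul, zero_add, add_zero,
        mul_comm (Gm (gammaC N) (nuC N a))]
      module
    | succ b =>
      simp only [add_tsub_cancel_right, mC_add_one, Gm_add_one, Gp_mul_self]
      module

/-- The coefficient of `e_{-γ+a} ⊗ f_{j+1+u-a}` in `ψ_(-γ+u)`. -/
def psiCoeff (N : ℕ) (j : ℂ) (u a : ℕ) : ℂ :=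
  (-1 : ℂ) ^ a * ∏ s ∈ Finset.range a,
    Gp j (j + (u : ℂ) - (s : ℂ)) / Gp (gammaC N) (-gammaC N + (s : ℂ))

lemma psiCoeff_succ_mul {N a : ℕ} (j : ℂ) (u : ℕ) (ha : a < N) :
    psiCoeff N j u (a + 1) * Gp (gammaC N) (-gammaC N + (a : ℂ)) =
      -(psiCoeff N j u a * Gp j (j + (u : ℂ) - (a : ℂ))) := by
  have h := Gp_gammaC_ne_zero ha
  rw [psiCoeff, psiCoeff, Finset.prod_range_succ, pow_succ]
  field_simp

lemma psiVec_eq (N : ℕ) (j : ℂ) (u : ℕ) (hu : u ≤ N) :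
    psiVec N j u hu = ∑ a : Fin (u + 1), psiCoeff N j u a •
      Finsupp.single (Fin.castLE (Nat.succ_le_succ hu) a, u - (a : ℕ)) (1 : ℂ) := rfl

lemma psiVec_ne_zero (N : ℕ) (j : ℂ) (u : ℕ) (hu : u ≤ N) : psiVec N j u hu ≠ 0 := by
  intro h
  have h0 := DFunLike.congr_fun h ((0 : Fin (N + 1)), u)
  rw [psiVec_eq, Fin.sum_univ_succ] at h0
  simp [Fin.ext_iff, psiCoeff] at h0

lemma J0op_psiVec (N : ℕ) (j : ℂ) (u : ℕ) (hu : u ≤ N) :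
    J0op N j (psiVec N j u hu) = (j + (-gammaC N + (u : ℂ)) + 1) • psiVec N j u hu := by
  rw [psiVec_eq, map_sum, Finset.smul_sum]
  refine Finset.sum_congr rfl fun a _ => ?_
  rw [map_smul, J0op_single, smul_comm]
  congr 1
  rw [nuC, mC, Nat.cast_sub (Nat.lt_succ_iff.mp a.isLt), Fin.val_castLE]
  ring

lemma Jmop_psiVec (N : ℕ) (j : ℂ) (u : ℕ) (hu : u ≤ N) :
    Jmop N j (psiVec N j u hu) = 0 := by
  simp only [psiVec_eq, map_sum, map_smul, Jmop_single, smul_add, smul_smul,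
    Finset.sum_add_distrib]
  rw [Fin.sum_univ_succ, Fin.sum_univ_castSucc (n := u) (f := fun a => (_ : ℂ) • _)]
  have hfirst : Gm (gammaC N) (nuC N (Fin.castLE (Nat.succ_le_succ hu) 0)) = 0 := by
    rw [show Fin.castLE (Nat.succ_le_succ hu) 0 = 0 from rfl, nuC_zero, Gm_neg_self]
  have hlast : Gm j (mC j (u - (Fin.last u : ℕ))) = 0 := by
    rw [Fin.val_last, Nat.sub_self, mC_zero, Gm_self_add_one]
  rw [hfirst, hlast, mul_zero, mul_zero, zero_smul, zero_smul, zero_add, add_zero,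
    ← Finset.sum_add_distrib]
  refine Finset.sum_eq_zero fun a _ => ?_
  have haN : (a : ℕ) < N := a.isLt.trans_le hu
  have hindex : Fin.castLE (Nat.succ_le_succ hu) a.succ - 1 =
      Fin.castLE (Nat.succ_le_succ hu) a.castSucc := by
    rw [sub_eq_iff_eq_add, Fin.ext_iff, Fin.val_add_one_of_lt]
    · simp
    · simpa [Fin.lt_def] using haN
  have hnu : nuC N (Fin.castLE (Nat.succ_le_succ hu) a.succ) = -gammaC N + ((a : ℕ) : ℂ) + 1 := by
    simp only [nuC, Fin.val_castLE, Fin.val_succ]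
    push_cast
    ring
  have hm : mC j (u - (a.castSucc : ℕ)) = j + (u : ℂ) - ((a : ℕ) : ℂ) + 1 := by
    rw [mC, Fin.val_castSucc, Nat.cast_sub a.isLt.le]
    ring
  rw [hindex, hnu, hm, Gm_add_one, Gm_add_one, Fin.val_succ, Fin.val_castSucc,
    psiCoeff_succ_mul j u haN, Nat.sub_sub, neg_smul, neg_add_cancel]

/-- In `F_γ ⊗ D⁺_j`, each `ψ_(μ)` (`μ ∈ M_γ`) is a nonzero lowest weight vector and a
Casimir eigenvector with eigenvalue `q_(μ) = -(j+μ)(j+μ+1)`. -/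
theorem lowest_weight_vectors (N : ℕ) (hN : 1 ≤ N) (j : ℂ) (u : ℕ) (hu : u ≤ N) :
    psiVec N j u hu ≠ 0 ∧
    Jmop N j (psiVec N j u hu) = 0 ∧
    Qop N j (psiVec N j u hu) =
      (-((j + (-gammaC N + (u : ℂ))) * (j + (-gammaC N + (u : ℂ)) + 1))) •
        psiVec N j u hu := by
  have hm := Jmop_psiVec N j u hu
  refine ⟨psiVec_ne_zero N j u hu, hm, ?_⟩
  simp only [Qop, LinearMap.add_apply, LinearMap.neg_apply, LinearMap.comp_apply,
    LinearMap.id_apply, map_add, map_smul, Jmop_Jpop, hm, map_zero, J0op_psiVec]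
  module

end
end
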